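/- Let ℬ ⊆ 𝒜 be a unital *-subalgebra and let s₁, …, s_k ∈ 𝒜 be self-adjoint elements which form their own conjugate system with respect to ℬ: for every n ≥ 0, all b₀, …, bₙ ∈ ℬ and all i, i₁, …, iₙ ∈ {1, …, k}: φ(s_i b₀ s_{i₁} b₁ ⋯ s_{iₙ} bₙ) = Σ_{m=1}^{n} δ_{i, iₘ} φ(b₀ s_{i₁} ⋯ s_{i_{m−1}} b_{m−1}) φ(bₘ s_{i_{m+1}} ⋯ s_{iₙ} bₙ). Then each s_i is standard semicircular in moments: φ(s_i^{2m}) = Cₘ (the m-th Catalan number) and φ(s_i^{2m+1}) = 0 for all m ≥ 0; and the sets {s₁}, …, {s_k}, ℬ are free with respect to φ. (Lemma 5.4.) -/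

import Mathlib

open scoped BigOperators
open ComplexOrder

noncomputable section

variable {A : Type*} [Ring A] [Algebra ℂ A] [StarRing A] [StarModule ℂ A]

/-- Selection: index `0` gives `x`, index `1` gives `star x`. -/
def sel {T : Type*} [Star T] (x : T) (i : Fin 2) : T := if i = 0 then x else star x

/-- The word `b₀ x₁ b₁ x₂ b₂ ⋯ xₙ bₙ`. -/
def interWord {T : Type*} [Ring T] {n : ℕ} (bs : Fin (n + 1) → T) (xs : Fin n → T) : T :=
  bs 0 * (List.ofFn fun m : Fin n => xs m * bs m.succ).prod

/-- For `m : Fin n` (standing for the paper's index `m+1 ∈ {1, …, n}`), the prefix word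
`b₀ x₁ b₁ ⋯ xₘ bₘ`. -/
def preWord {T : Type*} [Ring T] {n : ℕ} (bs : Fin (n + 1) → T) (xs : Fin n → T)
    (m : Fin n) : T :=
  bs 0 * ((List.ofFn fun j : Fin n => xs j * bs j.succ).take (m : ℕ)).prod

/-- For `m : Fin n` (standing for the paper's index `m+1 ∈ {1, …, n}`), the suffix word
`b_{m+1} x_{m+2} b_{m+2} ⋯ xₙ bₙ`. -/
def sufWord {T : Type*} [Ring T] {n : ℕ} (bs : Fin (n + 1) → T) (xs : Fin n → T)
    (m : Fin n) : T :=
  bs m.succ * ((List.ofFn fun j : Fin n => xs j * bs j.succ).drop ((m : ℕ) + 1)).prod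

/-- The normalized trace `φ_d = tr ⊗ φ` on `M_d(𝒜)`. -/
def phid {d : ℕ} (φ : A →ₗ[ℂ] ℂ) (X : Matrix (Fin d) (Fin d) A) : ℂ :=
  (∑ i, φ (X i i)) / d

/-- The entry `a_{kl}^{(ε)}` selected by an index triple `(k, l, ε)`:
`ε = 0` gives `a_{kl}`, `ε = 1` gives `(a_{kl})*`. -/
def ent {d : ℕ} (a : Fin d → Fin d → A) (t : Fin d × Fin d × Fin 2) : A :=
  if t.2.2 = 0 then a t.1 t.2.1 else star (a t.1 t.2.1)

/-- The family `{ξ_ij, ξ_ij*}` fulfills the conjugate relations for `{a_ij, a_ij*}`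
with respect to a unital *-subalgebra `B`. -/
def FamConjRel {d : ℕ} (φ : A →ₗ[ℂ] ℂ) (B : StarSubalgebra ℂ A)
    (a ξ : Fin d → Fin d → A) : Prop :=
  ∀ (n : ℕ) (bs : Fin (n + 1) → A) (idx : Fin n → Fin d × Fin d × Fin 2)
    (t : Fin d × Fin d × Fin 2),
    (∀ m, bs m ∈ B) →
    φ (ent ξ t * interWord bs fun m => ent a (idx m)) =
      ∑ m : Fin n,
        (if idx m = t then
          φ (preWord bs (fun j => ent a (idx j)) m) *
            φ (sufWord bs (fun j => ent a (idx j)) m)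
        else 0)

/-- `Xm` fulfills the conjugate relations for the matrix `Am` (paired with its adjoint,
matching on the index `e`) with respect to the matrices satisfying `P`. -/
def MatFamConjRel {d : ℕ} (φd : Matrix (Fin d) (Fin d) A → ℂ)
    (P : Matrix (Fin d) (Fin d) A → Prop)
    (Am Xm : Matrix (Fin d) (Fin d) A) (e : Fin 2) : Prop :=
  ∀ (n : ℕ) (Bs : Fin (n + 1) → Matrix (Fin d) (Fin d) A) (i : Fin n → Fin 2),
    (∀ m, P (Bs m)) →
    φd (Xm * interWord Bs fun m => sel Am (i m)) =
      ∑ m : Fin n,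
        (if i m = e then
          φd (preWord Bs (fun j => sel Am (i j)) m) *
            φd (sufWord Bs (fun j => sel Am (i j)) m)
        else 0)

/-- Freeness of a family of subsets of `T` with respect to a state `φ`. -/
def AreFree {T : Type*} [Ring T] [Algebra ℂ T] {ι : Type*} (φ : T → ℂ) (S : ι → Set T) :
    Prop :=
  ∀ (n : ℕ) (t : Fin (n + 1) → ι) (z : Fin (n + 1) → T),
    (∀ m, z m ∈ Algebra.adjoin ℂ (S (t m))) →
    (∀ m, φ (z m) = 0) →
    (∀ m : Fin n, t m.castSucc ≠ t m.succ) →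
    φ ((List.ofFn z).prod) = 0

section Helpers

open TensorProduct

variable {R : Type*} [Ring R] [Algebra ℂ R]

/-- Evaluation of a word in letters from `B` and the `s j`. -/
def evW (B : Subalgebra ℂ R) {k : ℕ} (s : Fin k → R) : List (B ⊕ Fin k) → R
  | [] => 1
  | Sum.inl b :: w => (b : R) * evW B s w
  | Sum.inr j :: w => s j * evW B s w

/-- The free difference quotient of a word, in direction `i`. -/
def dW (B : Subalgebra ℂ R) {k : ℕ} (s : Fin k → R) (i : Fin k) :
    List (B ⊕ Fin k) → R ⊗[ℂ] R
  | [] => 0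
  | Sum.inl b :: w => ((b : R) ⊗ₜ[ℂ] (1 : R)) * dW B s i w
  | Sum.inr j :: w => (if j = i then (1 : R) ⊗ₜ[ℂ] evW B s w else 0) +
      (s j ⊗ₜ[ℂ] (1 : R)) * dW B s i w

/-- `d` is a free difference quotient of `x` in direction `i`. -/
def HasD (B : Subalgebra ℂ R) {k : ℕ} (s : Fin k → R) (i : Fin k) (x : R)
    (d : R ⊗[ℂ] R) : Prop :=
  (x, d) ∈ Submodule.span ℂ (Set.range fun w => (evW B s w, dW B s i w))

/-- The functional `φ ⊗ φ`. -/
def phi2 (φ : R →ₗ[ℂ] ℂ) : R ⊗[ℂ] R →ₗ[ℂ] ℂ :=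
  LinearMap.mul' ℂ ℂ ∘ₗ TensorProduct.map φ φ

@[simp] lemma phi2_tmul (φ : R →ₗ[ℂ] ℂ) (x y : R) : phi2 φ (x ⊗ₜ[ℂ] y) = φ x * φ y := by
  simp [phi2]

variable {B : Subalgebra ℂ R} {k : ℕ} {s : Fin k → R} {i : Fin k}

lemma evW_append (v w : List (B ⊕ Fin k)) : evW B s (v ++ w) = evW B s v * evW B s w := by
  induction v with
  | nil => simp [evW]
  | cons c v ih => rcases c with b | j <;> simp [evW, ih, mul_assoc]

lemma dW_append (v w : List (B ⊕ Fin k)) : dW B s i (v ++ w) =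
    (evW B s v ⊗ₜ[ℂ] (1 : R)) * dW B s i w + dW B s i v * ((1 : R) ⊗ₜ[ℂ] evW B s w) := by
  induction v with
  | nil => simp [evW, dW, ← Algebra.TensorProduct.one_def]
  | cons c v ih =>
    rcases c with b | j
    · simp [evW, dW, ih, mul_add, ← mul_assoc]
    · by_cases h : j = i
      · simp [evW, dW, ih, mul_add, add_mul, ← mul_assoc, evW_append, h]
        abel
      · simp [evW, dW, ih, mul_add, ← mul_assoc, h]

lemma HasD.add {x y : R} {d e : R ⊗[ℂ] R} (hx : HasD B s i x d) (hy : HasD B s i y e) :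
    HasD B s i (x + y) (d + e) := Submodule.add_mem _ hx hy

lemma HasD.smul {x : R} {d : R ⊗[ℂ] R} (c : ℂ) (hx : HasD B s i x d) :
    HasD B s i (c • x) (c • d) := Submodule.smul_mem _ c hx

lemma HasD.word (w : List (B ⊕ Fin k)) : HasD B s i (evW B s w) (dW B s i w) :=
  Submodule.subset_span ⟨w, rfl⟩

lemma HasD.one : HasD B s i (1 : R) 0 := by
  simpa [evW, dW] using HasD.word (B := B) (s := s) (i := i) []

lemma HasD.ofB {b : R} (hb : b ∈ B) : HasD B s i b 0 := by
  simpa [evW, dW] using HasD.word (B := B) (s := s) (i := i) [Sum.inl ⟨b, hb⟩]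

lemma HasD.ofS (j : Fin k) : HasD B s i (s j) (if j = i then 1 else 0) := by
  simpa [evW, dW, Algebra.TensorProduct.one_def] using
    HasD.word (B := B) (s := s) (i := i) [Sum.inr j]

lemma HasD.mul {x y : R} {d e : R ⊗[ℂ] R} (hx : HasD B s i x d) (hy : HasD B s i y e) :
    HasD B s i (x * y) ((x ⊗ₜ[ℂ] (1 : R)) * e + d * ((1 : R) ⊗ₜ[ℂ] y)) := by
  have key : ∀ p ∈ Submodule.span ℂ (Set.range fun w => (evW B s w, dW B s i w)),
      ∀ q ∈ Submodule.span ℂ (Set.range fun w => (evW B s w, dW B s i w)),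
      HasD B s i (p.1 * q.1) ((p.1 ⊗ₜ[ℂ] (1 : R)) * q.2 + p.2 * ((1 : R) ⊗ₜ[ℂ] q.1)) := by
    intro p hp q hq
    induction hp, hq using Submodule.span_induction₂ with
    | mem_mem p q hp hq =>
      obtain ⟨v, rfl⟩ := hp
      obtain ⟨w, rfl⟩ := hq
      have := HasD.word (B := B) (s := s) (i := i) (v ++ w)
      rwa [evW_append, dW_append] at this
    | zero_left y _ => simpa using HasD.smul 0 (HasD.one (B := B) (s := s) (i := i))
    | zero_right x _ => simpa using HasD.smul 0 (HasD.one (B := B) (s := s) (i := i))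
    | add_left x y z _ _ _ h1 h2 =>
      convert h1.add h2 using 1
      · simp [add_mul]
      · simp [add_mul, TensorProduct.add_tmul]; abel
    | add_right x y z _ _ _ h1 h2 =>
      convert h1.add h2 using 1
      · simp [mul_add]
      · simp [mul_add, TensorProduct.tmul_add]; abel
    | smul_left r x y _ _ h =>
      convert h.smul r using 1
      · simp
      · rw [Prod.smul_fst, Prod.smul_snd, ← TensorProduct.smul_tmul', smul_mul_assoc,
          smul_mul_assoc, smul_add]
    | smul_right r x y _ _ h =>
      convert h.smul r using 1
      · simp
      · simp
  exact key _ hx _ hy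

/-- The conjugate relation, in the form used in the frozen statement. -/
def SelfConj (φ : R →ₗ[ℂ] ℂ) (B : Subalgebra ℂ R) {k : ℕ} (s : Fin k → R) : Prop :=
  ∀ (n : ℕ) (bs : Fin (n + 1) → R) (idx : Fin n → Fin k) (i : Fin k),
      (∀ m, bs m ∈ B) →
      φ (s i * interWord bs fun m => s (idx m)) =
        ∑ m : Fin n,
          (if idx m = i then
            φ (preWord bs (fun j => s (idx j)) m) * φ (sufWord bs (fun j => s (idx j)) m)
          else 0)

lemma word_normal (i : Fin k) (w : List (B ⊕ Fin k)) :
    ∃ (n : ℕ) (bs : Fin (n + 1) → R) (idx : Fin n → Fin k), (∀ m, bs m ∈ B) ∧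
      evW B s w = interWord bs (fun m => s (idx m)) ∧
      dW B s i w = ∑ m : Fin n, (if idx m = i then
        preWord bs (fun j => s (idx j)) m ⊗ₜ[ℂ] sufWord bs (fun j => s (idx j)) m else 0) := by
  induction w with
  | nil => exact ⟨0, fun _ => 1, Fin.elim0, fun _ => B.one_mem, by simp [evW, interWord],
      by simp [dW]⟩
  | cons c w ih =>
    obtain ⟨n, bs, idx, hbs, he, hd⟩ := ih
    rcases c with b | j
    · refine ⟨n, Fin.cons (b * bs 0) (fun m => bs m.succ), idx, ?_, ?_, ?_⟩
      · intro m
        refine Fin.cases ?_ (fun m => ?_) m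
        · simpa using B.mul_mem b.2 (hbs 0)
        · simpa using hbs _
      · simp [evW, he, interWord, mul_assoc]
      · simp only [dW, hd, Finset.mul_sum]
        refine Finset.sum_congr rfl fun m _ => ?_
        split_ifs
        · simp [preWord, sufWord, mul_assoc]
        · simp
    · refine ⟨n + 1, Fin.cons 1 bs, Fin.cons j idx, ?_, ?_, ?_⟩
      · intro m
        refine Fin.cases ?_ (fun m => ?_) m
        · simpa using B.one_mem
        · simpa using hbs _
      · simp [evW, he, interWord, mul_assoc, List.ofFn_succ]
      · simp only [dW, hd, Finset.mul_sum, Fin.sum_univ_succ]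
        congr 1
        · simp [preWord, sufWord, he, interWord, List.ofFn_succ]
        · refine Finset.sum_congr rfl fun m _ => ?_
          simp only [Fin.cons_succ]
          split_ifs
          · simp [preWord, sufWord, mul_assoc, List.ofFn_succ]
          · simp

variable {φ : R →ₗ[ℂ] ℂ}

lemma HasD.main (hc : SelfConj φ B s) {x : R} {d : R ⊗[ℂ] R} (h : HasD B s i x d) :
    φ (s i * x) = phi2 φ d := by
  have key : ∀ p ∈ Submodule.span ℂ (Set.range fun w => (evW B s w, dW B s i w)),
      φ (s i * p.1) = phi2 φ p.2 := by
    intro p hp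
    induction hp using Submodule.span_induction with
    | mem p hp =>
      obtain ⟨w, rfl⟩ := hp
      obtain ⟨n, bs, idx, hbs, he, hd⟩ := word_normal (s := s) i w
      simp only [he, hd, map_sum]
      rw [hc n bs idx i hbs]
      refine Finset.sum_congr rfl fun m _ => ?_
      split_ifs <;> simp
    | zero => simp
    | add x y _ _ h1 h2 => simp [mul_add, h1, h2]
    | smul a x _ h => simp [h]
  exact key _ h

lemma HasD.pow (d : ℕ) : HasD B s i (s i ^ d)
    (∑ j ∈ Finset.range d, (s i ^ j) ⊗ₜ[ℂ] (s i ^ (d - 1 - j))) := by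
  induction d with
  | zero => simpa using HasD.one
  | succ d ih =>
    have := (HasD.ofS (B := B) (s := s) (i := i) i).mul ih
    rw [← pow_succ'] at this
    convert this using 1
    rw [Finset.sum_range_succ', Finset.mul_sum]
    simp only [if_true, one_mul, pow_zero]
    congr 1
    refine Finset.sum_congr rfl fun j hj => ?_
    simp [pow_succ', Nat.sub_sub, add_comm]

lemma moment_rec (hc : SelfConj φ B s) (i : Fin k) (d : ℕ) :
    φ (s i ^ (d + 1)) = ∑ j ∈ Finset.range d, φ (s i ^ j) * φ (s i ^ (d - 1 - j)) := by
  rw [pow_succ', (HasD.pow d).main hc]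
  simp

lemma sum_even {g : ℕ → ℂ} (m : ℕ) (hg : ∀ j < m, g (2 * j + 1) = 0) :
    ∑ j ∈ Finset.range (2 * m + 1), g j = ∑ j ∈ Finset.range (m + 1), g (2 * j) := by
  induction m with
  | zero => simp
  | succ m ih =>
    rw [show 2 * (m + 1) + 1 = (2 * m + 1) + 1 + 1 by ring, Finset.sum_range_succ,
      Finset.sum_range_succ, ih (fun j hj => hg j (by omega)), hg m (by omega),
      Finset.sum_range_succ _ (m + 1)]
    simp [mul_add]

lemma moments (hφ1 : φ 1 = 1) (hc : SelfConj φ B s) (i : Fin k) (m : ℕ) :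
    φ (s i ^ (2 * m)) = catalan m ∧ φ (s i ^ (2 * m + 1)) = 0 := by
  induction m using Nat.strong_induction_on with
  | _ m ih =>
    constructor
    · rcases m with _ | m
      · simpa using hφ1
      · rw [show 2 * (m + 1) = (2 * m + 1) + 1 by ring, moment_rec hc, sum_even, catalan_succ]
        · push_cast
          rw [Finset.sum_range]
          refine Finset.sum_congr rfl fun j _ => ?_
          have hj := j.2
          rw [(ih j (by omega)).1, show 2 * m - 2 * (j : ℕ) = 2 * (m - j) by omega,
            (ih (m - j) (by omega)).1]
        · intro j hj
          rw [(ih j (by omega)).2, zero_mul]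
    · rw [moment_rec hc]
      refine Finset.sum_eq_zero fun j hj => ?_
      rw [Finset.mem_range] at hj
      obtain ⟨l, rfl | rfl⟩ := Nat.even_or_odd' j
      · rw [show 2 * m - 1 - 2 * l = 2 * (m - 1 - l) + 1 by omega,
          (ih (m - 1 - l) (by omega)).2, mul_zero]
      · rw [(ih l (by omega)).2, zero_mul]

/-- The letter algebras. -/
def alg (B : Subalgebra ℂ R) {k : ℕ} (s : Fin k → R) (t : Option (Fin k)) : Subalgebra ℂ R :=
  Algebra.adjoin ℂ (t.elim (B : Set R) fun i => {s i})

lemma alg_hasD (i : Fin k) (t : Option (Fin k)) (z : R) (hz : z ∈ alg B s t) :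
    ∃ d, HasD B s i z d ∧ (t ≠ some i → d = 0) ∧
      d ∈ Submodule.span ℂ {u : R ⊗[ℂ] R | ∃ x ∈ alg B s (some i), ∃ y, u = x ⊗ₜ[ℂ] y} := by
  rcases t with _ | j
  · have : z ∈ B := by
      have hz' : z ∈ Algebra.adjoin ℂ (B : Set R) := hz
      rwa [Algebra.adjoin_eq] at hz'
    exact ⟨0, HasD.ofB this, fun _ => rfl, Submodule.zero_mem _⟩
  · by_cases hji : j = i
    · subst hji
      have hz' := hz
      unfold alg at hz'
      induction hz' using Algebra.adjoin_induction with
      | mem x hx =>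
        obtain rfl : x = s j := by simpa using hx
        refine ⟨_, HasD.ofS j, fun h => absurd rfl h, ?_⟩
        rw [if_pos rfl]
        exact Submodule.subset_span ⟨1, one_mem _, 1, rfl⟩
      | algebraMap r =>
        refine ⟨0, ?_, fun h => rfl, Submodule.zero_mem _⟩
        exact HasD.ofB (B.algebraMap_mem r)
      | add x y hx hy h1 h2 =>
        obtain ⟨d, hd, -, hd'⟩ := h1 hx
        obtain ⟨e, he, -, he'⟩ := h2 hy
        exact ⟨_, hd.add he, fun h => absurd rfl h, Submodule.add_mem _ hd' he'⟩
      | mul x y hx hy h1 h2 =>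
        obtain ⟨d, hd, -, hd'⟩ := h1 hx
        obtain ⟨e, he, -, he'⟩ := h2 hy
        refine ⟨_, hd.mul he, fun h => absurd rfl h, Submodule.add_mem _ ?_ ?_⟩
        · clear he
          induction he' using Submodule.span_induction with
          | mem u hu =>
            obtain ⟨a, ha, b, rfl⟩ := hu
            exact Submodule.subset_span ⟨x * a, mul_mem hx ha, b, by simp⟩
          | zero => simp
          | add u v _ _ h1 h2 => rw [mul_add]; exact Submodule.add_mem _ h1 h2
          | smul c u _ h => rw [mul_smul_comm]; exact Submodule.smul_mem _ _ h
        · clear hd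
          induction hd' using Submodule.span_induction with
          | mem u hu =>
            obtain ⟨a, ha, b, rfl⟩ := hu
            exact Submodule.subset_span ⟨a, ha, b * y, by simp⟩
          | zero => simp
          | add u v _ _ h1 h2 => rw [add_mul]; exact Submodule.add_mem _ h1 h2
          | smul c u _ h => rw [smul_mul_assoc]; exact Submodule.smul_mem _ _ h
    · suffices HasD B s i z 0 from ⟨0, this, fun _ => rfl, Submodule.zero_mem _⟩
      unfold alg at hz
      induction hz using Algebra.adjoin_induction with
      | mem x hx =>
        obtain rfl : x = s j := by simpa using hx
        simpa [hji] using HasD.ofS (B := B) (s := s) (i := i) j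
      | algebraMap r => exact HasD.ofB (B.algebraMap_mem r)
      | add x y hx hy h1 h2 => simpa using h1.add h2
      | mul x y hx hy h1 h2 => simpa using h1.mul h2

/-- Product of the second components of a list. -/
def lprod {ι : Type*} (L : List (ι × R)) : R := (L.map Prod.snd).prod

lemma list_hasD (φ : R →ₗ[ℂ] ℂ) (i : Fin k) (L : List (Option (Fin k) × R))
    (hL : ∀ a ∈ L, a.2 ∈ alg B s a.1) :
    ∃ d, HasD B s i (lprod L) d ∧ ∀ P : R,
      (∀ L1 z L2, L = L1 ++ (some i, z) :: L2 → ∀ x ∈ alg B s (some i),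
        φ (P * lprod L1 * x) = 0) → phi2 φ ((P ⊗ₜ[ℂ] (1 : R)) * d) = 0 := by
  induction L with
  | nil => exact ⟨0, by simpa [lprod] using HasD.one, fun P _ => by simp⟩
  | cons a L ih =>
    obtain ⟨e, he, hev⟩ := ih fun a ha => hL a (List.mem_cons_of_mem _ ha)
    obtain ⟨d, hd, hd0, hdU⟩ := alg_hasD i a.1 a.2 (hL a List.mem_cons_self)
    refine ⟨_, by simpa [lprod] using hd.mul he, fun P hP => ?_⟩
    rw [mul_add, map_add, ← mul_assoc, Algebra.TensorProduct.tmul_mul_tmul, mul_one, hev, zero_add]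
    · by_cases hai : a.1 = some i
      · have hx : ∀ x ∈ alg B s (some i), φ (P * x) = 0 := by
          intro x hx
          have := hP [] a.2 L (by simp [← hai]) x hx
          simpa [lprod] using this
        clear hd
        induction hdU using Submodule.span_induction with
        | mem u hu =>
          obtain ⟨x, hxm, y, rfl⟩ := hu
          simp [hx x hxm]
        | zero => simp
        | add u v _ _ h1 h2 =>
          rw [add_mul, mul_add, map_add, h1 (fun h => absurd hai h),
            h2 (fun h => absurd hai h), add_zero]
        | smul c u _ h =>
          rw [smul_mul_assoc, mul_smul_comm, map_smul, h (fun h => absurd hai h), smul_zero]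
      · simp [hd0 hai]
    · intro L1 z L2 h x hx
      have := hP (a :: L1) z L2 (by simp [h]) x hx
      simpa [lprod, mul_assoc] using this

/-- Alternating centered word. -/
def Good (φ : R →ₗ[ℂ] ℂ) (B : Subalgebra ℂ R) {k : ℕ} (s : Fin k → R)
    (L : List (Option (Fin k) × R)) : Prop :=
  (∀ a ∈ L, a.2 ∈ alg B s a.1 ∧ φ a.2 = 0) ∧ L.IsChain (fun a b => a.1 ≠ b.1)

lemma good_helper (hφ1 : φ 1 = 1) (n : ℕ)
    (ih : ∀ L, L.length < n → L ≠ [] → Good φ B s L → φ (lprod L) = 0)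
    (t : Option (Fin k)) (y : R) (hy : y ∈ alg B s t) (L : List (Option (Fin k) × R))
    (hn : L.length + 1 < n) (hne : L ≠ []) (hg : Good φ B s L)
    (hh : ∀ b ∈ L.head?, t ≠ b.1) : φ (y * lprod L) = 0 := by
  have h1 := ih L (by omega) hne hg
  have h2 := ih ((t, y - φ y • (1 : R)) :: L) (by simpa using hn) (by simp) ⟨by
      intro a ha
      rcases List.mem_cons.1 ha with rfl | ha
      · exact ⟨sub_mem hy ((alg B s t).smul_mem (one_mem _) _), by simp [hφ1]⟩
      · exact hg.1 a ha, List.isChain_cons.2 ⟨hh, hg.2⟩⟩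
  have h3 : lprod ((t, y - φ y • (1 : R)) :: L) = y * lprod L - φ y • lprod L := by
    simp [lprod, sub_mul]
  rw [h3, map_sub, map_smul, h1] at h2
  simpa using h2

lemma good_some (hφ1 : φ 1 = 1) (hφtr : ∀ x y : R, φ (x * y) = φ (y * x))
    (hc : SelfConj φ B s) (n : ℕ)
    (ih : ∀ L, L.length < n → L ≠ [] → Good φ B s L → φ (lprod L) = 0)
    (i : Fin k) (z : R) (L : List (Option (Fin k) × R)) (hn : L.length + 1 = n) (hne : L ≠ [])
    (hg : Good φ B s ((some i, z) :: L)) : φ (z * lprod L) = 0 := by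
  have hgL : Good φ B s L := ⟨fun a ha => hg.1 a (List.mem_cons_of_mem _ ha),
    (List.isChain_cons.1 hg.2).2⟩
  have hhd := (List.isChain_cons.1 hg.2).1
  have hpow : ∀ d : ℕ, φ (s i ^ d * lprod L) = 0 := by
    intro d
    induction d using Nat.strong_induction_on with
    | _ d ihd =>
      rcases d with _ | d
      · simpa using ih L (by omega) hne hgL
      · obtain ⟨e, he, hev⟩ := list_hasD φ i L (fun a ha => (hgL.1 a ha).1)
        rw [pow_succ', mul_assoc, ((HasD.pow d).mul he).main hc, map_add, hev, zero_add]
        · rw [Finset.sum_mul, map_sum]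
          refine Finset.sum_eq_zero fun j hj => ?_
          rw [Finset.mem_range] at hj
          simp [ihd (d - 1 - j) (by omega)]
        · rintro L1 z' L2 rfl x hx
          rw [hφtr, ← mul_assoc]
          have hL1 : L1 ≠ [] := by
            rintro rfl
            exact hhd (some i, z') (by simp) rfl
          refine good_helper hφ1 n ih (some i) _ (mul_mem hx (pow_mem ?_ d)) L1 ?_ hL1 ?_ ?_
          · exact Algebra.subset_adjoin (by simp)
          · simp at hn; omega
          · exact ⟨fun a ha => hgL.1 a (by simp [ha]), (List.isChain_append.1 hgL.2).1⟩
          · intro b hb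
            exact hhd b (by
              rcases L1 with _ | ⟨c, L1⟩
              · simp at hb
              · simpa using hb)
  have hz : z ∈ Algebra.adjoin ℂ {s i} := (hg.1 _ List.mem_cons_self).1
  rw [Algebra.adjoin_singleton_eq_range_aeval] at hz
  obtain ⟨p, rfl⟩ := hz
  change φ (Polynomial.aeval (s i) p * _) = 0
  clear hg hhd
  induction p using Polynomial.induction_on' with
  | add p q hp hq => simp [add_mul, hp, hq]
  | monomial d a =>
    rw [Polynomial.aeval_monomial, ← Algebra.smul_def, smul_mul_assoc, map_smul, hpow, smul_zero]

lemma good_zero (hφ1 : φ 1 = 1) (hφtr : ∀ x y : R, φ (x * y) = φ (y * x))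
    (hc : SelfConj φ B s) (n : ℕ) :
    ∀ L, L.length = n → L ≠ [] → Good φ B s L → φ (lprod L) = 0 := by
  induction n using Nat.strong_induction_on with
  | _ n ih0 =>
    have ih : ∀ L, L.length < n → L ≠ [] → Good φ B s L → φ (lprod L) = 0 :=
      fun L hL => ih0 _ hL L rfl
    rintro (_ | ⟨⟨t, z⟩, L⟩) hn hne hg
    · exact absurd rfl hne
    have hz := hg.1 _ List.mem_cons_self
    by_cases hL : L = []
    · subst hL
      simpa [lprod] using hz.2
    have hcons : lprod ((t, z) :: L) = z * lprod L := by simp [lprod]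
    rw [hcons]
    rcases t with _ | i
    swap
    · exact good_some hφ1 hφtr hc n ih i z L (by simpa using hn) hL hg
    obtain ⟨hhd, hchL⟩ := List.isChain_cons.1 hg.2
    have hgL : ∀ a ∈ L, a.2 ∈ alg B s a.1 ∧ φ a.2 = 0 :=
      fun a ha => hg.1 a (List.mem_cons_of_mem _ ha)
    obtain ⟨M, c, rfl⟩ : ∃ M c, L = M ++ [c] :=
      ⟨L.dropLast, L.getLast hL, (List.dropLast_append_getLast hL).symm⟩
    by_cases hc1 : c.1 = none
    · have hM : M ≠ [] := by
        rintro rfl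
        exact hhd c (by simp) hc1.symm
      have : z * lprod (M ++ [c]) = (z * lprod M) * c.2 := by simp [lprod, mul_assoc]
      rw [this, hφtr, ← mul_assoc]
      have hcm := (hgL c (by simp)).1
      rw [hc1] at hcm
      refine good_helper hφ1 n ih none _ (mul_mem hcm hz.1) M ?_ hM ?_ ?_
      · simp at hn; omega
      · exact ⟨fun a ha => hgL a (by simp [ha]), (List.isChain_append.1 hchL).1⟩
      · intro b hb
        exact hhd b (by
          rcases M with _ | ⟨c, M⟩
          · simp at hb
          · simpa using hb)
    · skip
      obtain ⟨b, N, hbN⟩ := List.exists_cons_of_ne_nil hL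
      have hb1 : b.1 ≠ none := fun h => hhd b (by simp [hbN]) h.symm
      obtain ⟨i, hi⟩ := Option.ne_none_iff_exists'.1 hb1
      obtain ⟨b1, b2⟩ := b
      simp only at hi
      subst hi
      have hr : φ (z * lprod (M ++ [c])) = φ (b2 * lprod (N ++ [(none, z)])) := by
        rw [hφtr, hbN]
        simp [lprod, mul_assoc]
      rw [hr]
      refine good_some hφ1 hφtr hc n ih i b2 _ ?_ (by simp) ⟨?_, ?_⟩
      · have := congrArg List.length hbN
        simp at this hn ⊢
        omega
      · intro a ha
        rw [← List.cons_append, ← hbN] at ha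
        rcases List.mem_append.1 ha with ha | ha
        · exact hgL a ha
        · rw [List.mem_singleton.1 ha]; exact hz
      · rw [← List.cons_append, ← hbN]
        refine List.isChain_append.2 ⟨hchL, by simp, ?_⟩
        intro x hx y hy
        simp at hx hy
        subst hx hy
        exact hc1

lemma isChain_ofFn_aux {α : Type*} (r : α → α → Prop) (n : ℕ) (f : Fin (n + 1) → α)
    (h : ∀ m : Fin n, r (f m.castSucc) (f m.succ)) : (List.ofFn f).IsChain r := by
  induction n with
  | zero => simp
  | succ n ih =>
    rw [List.ofFn_succ, List.isChain_cons]
    refine ⟨?_, ih _ fun m => by simpa using h m.succ⟩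
    intro y hy
    simp [List.ofFn_succ] at hy
    subst hy
    simpa using h 0

end Helpers

/-- Lemma 5.4: if the self-adjoint family `s₁, …, s_k` is its own conjugate system
with respect to `ℬ`, then each `s_i` is standard semicircular in moments, and the sets
`{s₁}, …, {s_k}, ℬ` are free. -/
theorem self_conjugate_family_is_semicircular_and_free
    (φ : A →ₗ[ℂ] ℂ)
    (hφ1 : φ 1 = 1)
    (hφpos : ∀ x : A, 0 ≤ φ (star x * x))
    (hφtr : ∀ x y : A, φ (x * y) = φ (y * x))
    (B : StarSubalgebra ℂ A)
    (k : ℕ) (s : Fin k → A)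
    (hsa : ∀ i, star (s i) = s i)
    (hconj : ∀ (n : ℕ) (bs : Fin (n + 1) → A) (idx : Fin n → Fin k) (i : Fin k),
      (∀ m, bs m ∈ B) →
      φ (s i * interWord bs fun m => s (idx m)) =
        ∑ m : Fin n,
          (if idx m = i then
            φ (preWord bs (fun j => s (idx j)) m) * φ (sufWord bs (fun j => s (idx j)) m)
          else 0)) :
    (∀ (i : Fin k) (m : ℕ),
      φ (s i ^ (2 * m)) = catalan m ∧ φ (s i ^ (2 * m + 1)) = 0) ∧
    AreFree (fun x => φ x)
      (fun t : Option (Fin k) => t.elim (B : Set A) fun i => {s i}) := by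
  have hc : SelfConj φ B.toSubalgebra s := fun n bs idx i hb => hconj n bs idx i hb
  refine ⟨fun i m => moments hφ1 hc i m, ?_⟩
  intro n t z hz hz0 ht
  have h := good_zero hφ1 hφtr hc _ (List.ofFn fun m => (t m, z m)) rfl (by simp) ⟨?_, ?_⟩
  · simpa [lprod, List.map_ofFn, Function.comp_def] using h
  · intro a ha
    obtain ⟨m, rfl⟩ := (List.mem_ofFn' _ _).1 ha
    exact ⟨hz m, hz0 m⟩
  · exact isChain_ofFn_aux _ _ _ ht
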